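/- For the cylinder graph C_2 □ C_n (the Cartesian product of the cycle on 2 vertices—i.e., a single edge viewed as C_2—and the cycle on n vertices, n ≥ 3), the 1/2-domination number satisfies γ_{1/2}(C_2 □ C_n) = ⌈n/4⌉. -/

import Mathlib

/-!
A vertex of `C_2 □ C_n` dominates at most four vertices (itself, the other vertex of its column,
and its two neighbors along the cycle), so `|N[S]| ≤ 4 |S|` (`ncard_closedNbhd_le`). As half of
the `2 n` vertices is `n`, a `1/2`-dominating set has at least `⌈n/4⌉` elements.

Conversely, the vertices in columns `1, 3, 5, …`, taken in alternating rows, have pairwise disjoint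
closed neighborhoods: consecutive ones meet the same even column, but in different rows. With
`k = ⌈n/4⌉` of them the columns used are `0, …, 2 k`, and `2 k < n` for `n ≥ 3`, so there is room
for them without wrapping around, and they dominate `4 k ≥ n` vertices (`exists_set_closedNbhd`).
-/

open SimpleGraph

/-- The closed neighborhood `N[S]` of a set of vertices `S`: all vertices that
lie in `S` or are adjacent to a vertex of `S`. -/
def closedNbhd {V : Type*} (G : SimpleGraph V) (S : Set V) : Set V :=
  {v | v ∈ S ∨ ∃ u ∈ S, G.Adj u v}

/-- `S` is a `p`-dominating set of `G` if `|N[S]| ≥ p * |V|`. -/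
def IsPDomSet {V : Type*} [Fintype V] (G : SimpleGraph V) (p : ℚ) (S : Set V) : Prop :=
  p * (Fintype.card V : ℚ) ≤ ((closedNbhd G S).ncard : ℚ)

/-- The `p`-domination number: the minimum cardinality of a `p`-dominating set. -/
noncomputable def pDomNum {V : Type*} [Fintype V] (G : SimpleGraph V) (p : ℚ) : ℕ :=
  sInf {k | ∃ S : Set V, IsPDomSet G p S ∧ S.ncard = k}

/-- `S` is a dominating set of `G` if `N[S] = V`. -/
def IsDomSet {V : Type*} (G : SimpleGraph V) (S : Set V) : Prop :=
  closedNbhd G S = Set.univ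

/-- The domination number: the minimum cardinality of a dominating set. -/
noncomputable def domNum {V : Type*} [Fintype V] (G : SimpleGraph V) : ℕ :=
  sInf {k | ∃ S : Set V, IsDomSet G S ∧ S.ncard = k}

/-- The four vertices dominated by `u` in `C_2 □ C_n`, enumerated by `Fin 4`. -/
def ballEnum {n : ℕ} [NeZero n] (x : (Fin 2 × Fin n) × Fin 4) : Fin 2 × Fin n :=
  match x.2 with
  | 0 => x.1
  | 1 => (x.1.1 + 1, x.1.2)
  | 2 => (x.1.1, x.1.2 + 1)
  | 3 => (x.1.1, x.1.2 - 1)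

lemma fin_eq_add_one {n : ℕ} (hn : 3 ≤ n) [NeZero n] {a b : Fin n}
    (h : (a - b).val = 1) : a = b + 1 := by
  have h1 : a - b = 1 := by
    apply Fin.ext
    rw [h, Fin.val_one', Nat.mod_eq_of_lt (by omega)]
  rw [← h1, add_comm, sub_add_cancel]

lemma ncard_closedNbhd_le {n : ℕ} (hn : 3 ≤ n) (S : Set (Fin 2 × Fin n)) :
    (closedNbhd ((cycleGraph 2).boxProd (cycleGraph n)) S).ncard ≤ 4 * S.ncard := by
  have : NeZero n := ⟨by omega⟩
  have hsub : closedNbhd ((cycleGraph 2).boxProd (cycleGraph n)) S ⊆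
      ballEnum '' (S ×ˢ (Set.univ : Set (Fin 4))) := by
    rintro v (hv | ⟨u, hu, huv⟩)
    · exact ⟨(v, 0), ⟨hv, trivial⟩, rfl⟩
    · rw [boxProd_adj] at huv
      obtain ⟨u1, u2⟩ := u
      obtain ⟨v1, v2⟩ := v
      rcases huv with ⟨h, h'⟩ | ⟨h, h'⟩ <;> dsimp only at h h'
      · refine ⟨((u1, u2), 1), ⟨hu, trivial⟩, ?_⟩
        have : v1 = u1 + 1 := by
          have := h.ne
          revert this; clear * -; revert u1 v1; decide
        simp [ballEnum, this, h']
      · rw [cycleGraph_adj'] at h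
        rcases h with h | h
        · refine ⟨((u1, u2), 3), ⟨hu, trivial⟩, ?_⟩
          simp [ballEnum, fin_eq_add_one hn h, h']
        · refine ⟨((u1, u2), 2), ⟨hu, trivial⟩, ?_⟩
          simp [ballEnum, fin_eq_add_one hn h, h']
  calc _ ≤ _ := Set.ncard_le_ncard hsub (Set.toFinite _)
    _ ≤ _ := Set.ncard_image_le (Set.toFinite _)
    _ = 4 * S.ncard := by rw [Set.ncard_prod]; simp [mul_comm]

/-- If `2 * k < n`, the `k` vertices `(t % 2, 2 * t + 1)`, `t < k`, have pairwise disjoint closed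
neighborhoods that do not wrap around the cycle, so together they dominate `4 * k` vertices. -/
lemma exists_set_closedNbhd {n k : ℕ} (hk : 2 * k < n) :
    ∃ S : Set (Fin 2 × Fin n), S.ncard = k ∧
      4 * k ≤ (closedNbhd ((cycleGraph 2).boxProd (cycleGraph n)) S).ncard := by
  have card_range : ∀ m : ℕ, (Set.univ : Set (Fin m)).ncard = m := by
    intro m; simp
  let c : Fin k → Fin 2 × Fin n := fun t =>
    (⟨t.val % 2, by omega⟩, ⟨2 * t.val + 1, by omega⟩)
  -- An injective enumeration of the dominated vertices, column by column: `g m` is dominated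
  -- by the centre with index `m / 4`.
  let g : Fin (4 * k) → Fin 2 × Fin n := fun m =>
    (⟨((m.val + 1) / 4 + m.val) % 2, by omega⟩, ⟨(m.val + 1) / 2, by omega⟩)
  have hc : Function.Injective c := by
    intro s t h
    simp only [c, Prod.mk.injEq, Fin.mk.injEq] at h
    exact Fin.ext (by omega)
  have hg : Function.Injective g := by
    intro s t h
    simp only [g, Prod.mk.injEq, Fin.mk.injEq] at h
    have hq : (s.val + 1) / 4 = (t.val + 1) / 4 := by omega
    rw [hq] at h
    exact Fin.ext (by omega)
  refine ⟨c '' Set.univ, ?_, ?_⟩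
  · rw [Set.ncard_image_of_injective _ hc, card_range]
  · rw [← card_range (4 * k), ← Set.ncard_image_of_injective _ hg]
    refine Set.ncard_le_ncard ?_ (Set.toFinite _)
    rintro _ ⟨m, -, rfl⟩
    have hm := m.isLt
    let t : Fin k := ⟨m.val / 4, by omega⟩
    have ht : c t ∈ c '' Set.univ := ⟨t, trivial, rfl⟩
    obtain h | h | h | h : m.val % 4 = 0 ∨ m.val % 4 = 1 ∨ m.val % 4 = 2 ∨ m.val % 4 = 3 := by
      omega
    · refine Or.inr ⟨_, ht, ?_⟩
      rw [boxProd_adj]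
      refine Or.inr ⟨?_, Fin.ext (by simp only [c, g, t]; omega)⟩
      rw [cycleGraph_adj']
      left
      rw [Fin.sub_val_of_le (Fin.le_def.2 (by simp only [c, g, t]; omega))]
      simp only [c, g, t]; omega
    · refine Or.inr ⟨_, ht, ?_⟩
      rw [boxProd_adj]
      refine Or.inl ⟨?_, Fin.ext (by simp only [c, g, t]; omega)⟩
      have hne : (c t).1 ≠ (g m).1 := by
        intro e
        have := congrArg Fin.val e
        simp only [c, g, t] at this
        omega
      have key : ∀ a b : Fin 2, a ≠ b → (cycleGraph 2).Adj a b := by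
        intro a b; rw [cycleGraph_adj']; revert a b; decide
      exact key _ _ hne
    · left
      refine ⟨t, trivial, Prod.ext (Fin.ext ?_) (Fin.ext ?_)⟩ <;>
        simp only [c, g, t] <;> omega
    · refine Or.inr ⟨_, ht, ?_⟩
      rw [boxProd_adj]
      refine Or.inr ⟨?_, Fin.ext (by simp only [c, g, t]; omega)⟩
      rw [cycleGraph_adj']
      right
      rw [Fin.sub_val_of_le (Fin.le_def.2 (by simp only [c, g, t]; omega))]
      simp only [c, g, t]; omega

/-- For the cylinder graph `C_2 □ C_n` (`n ≥ 3`),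
`γ_{1/2}(C_2 □ C_n) = ⌈n/4⌉`. -/
theorem halfDom_cylinder_two (n : ℕ) (hn : 3 ≤ n) :
    pDomNum ((cycleGraph 2).boxProd (cycleGraph n)) (1/2) = ⌈(n : ℚ) / 4⌉₊ := by
  have hdom : ∀ S : Set (Fin 2 × Fin n),
      IsPDomSet ((cycleGraph 2).boxProd (cycleGraph n)) (1/2) S ↔
        n ≤ (closedNbhd ((cycleGraph 2).boxProd (cycleGraph n)) S).ncard := by
    intro S
    unfold IsPDomSet
    rw [Fintype.card_prod, Fintype.card_fin, Fintype.card_fin, ← Nat.cast_le (α := ℚ)]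
    push_cast
    rw [show (1 / 2 : ℚ) * (2 * n) = n by ring]
  have hceil : ∀ k : ℕ, ⌈(n : ℚ) / 4⌉₊ ≤ k ↔ n ≤ 4 * k := by
    intro k
    rw [Nat.ceil_le, div_le_iff₀ (by norm_num), ← Nat.cast_le (α := ℚ)]
    push_cast
    rw [mul_comm]
  have hle := (hceil _).1 le_rfl
  have hmin : ⌈(n : ℚ) / 4⌉₊ ≤ (n + 3) / 4 := (hceil _).2 (by omega)
  obtain ⟨S, hS, hcov⟩ := exists_set_closedNbhd (n := n) (k := ⌈(n : ℚ) / 4⌉₊) (by omega)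
  apply le_antisymm
  · exact Nat.sInf_le ⟨S, (hdom S).2 (hle.trans hcov), hS⟩
  · refine le_csInf ⟨_, S, (hdom S).2 (hle.trans hcov), hS⟩ ?_
    rintro k ⟨T, hT, rfl⟩
    exact (hceil _).2 (((hdom T).1 hT).trans (ncard_closedNbhd_le hn T))
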